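/- arXiv:1610.07789 — 2 statements merged into one kernel-verified Lean document; each statement's English description precedes it below -/
import Mathlib

section
/- Let 0 ≤ ε ≤ 1/2 and let N be an odd positive integer. Then the majority-decoding error probability satisfies ∑_{j=(N+1)/2}^{N} C(N,j)·ε^j·(1−ε)^{N−j} ≤ ε; that is, majority voting over N independent binary symmetric sub-channels with crossover probability ε never has larger error probability than a single sub-channel. -/
/-!
Let `f j = C(N, j) ε ^ j (1 - ε) ^ (N - j)`. Pair each losing outcome `j > N / 2` with its mirror
image `N - j`. The ratio `f j / f (N - j) = (ε / (1 - ε)) ^ (2 j - N)` is at most `ε / (1 - ε)`,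
so `f j` is at most the fraction `ε` of the total weight of the pair. The pairs are disjoint, and
all weights together sum to one.
-/

theorem sum_Ioc_half_add_reflect_le_sum_range {M : Type*} [AddCommMonoid M] [PartialOrder M]
    [IsOrderedAddMonoid M] {f : ℕ → M} (hf : ∀ j, 0 ≤ f j) (N : ℕ) :
    ∑ j ∈ Finset.Ioc (N / 2) N, (f j + f (N - j)) ≤ ∑ j ∈ Finset.range (N + 1), f j := by
  have hreflect : ∑ j ∈ Finset.Ioc (N / 2) N, f (N - j) = ∑ j ∈ Finset.range (N - N / 2), f j := by
    rw [← Finset.Ico_add_one_add_one_eq_Ioc, Finset.sum_Ico_reflect f _ le_rfl,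
      Nat.sub_self, Nat.add_sub_add_right, Finset.range_eq_Ico]
  calc ∑ j ∈ Finset.Ioc (N / 2) N, (f j + f (N - j))
      = ∑ j ∈ Finset.range (N - N / 2), f j + ∑ j ∈ Finset.Ioc (N / 2) N, f j := by
        rw [Finset.sum_add_distrib, hreflect, add_comm]
    _ ≤ ∑ j ∈ Finset.range (N / 2 + 1), f j + ∑ j ∈ Finset.Ioc (N / 2) N, f j := by
        gcongr
        · exact fun j _ _ => hf j
        · omega
    _ = ∑ j ∈ Finset.range (N + 1), f j := by
        rw [← Finset.Ico_add_one_add_one_eq_Ioc, Finset.sum_range_add_sum_Ico _ (by omega)]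

section OrderedSemiring

variable {R : Type*} [CommSemiring R] [PartialOrder R] [IsOrderedRing R] {a b : R}

theorem pow_mul_pow_le_pow_mul_pow_swap (ha : 0 ≤ a) (hab : a ≤ b) {k j : ℕ} (hkj : k ≤ j) :
    a ^ j * b ^ k ≤ a ^ k * b ^ j := by
  have hb : 0 ≤ b := ha.trans hab
  obtain ⟨d, rfl⟩ := Nat.exists_eq_add_of_le hkj
  calc a ^ (k + d) * b ^ k = a ^ k * b ^ k * a ^ d := by ring
    _ ≤ a ^ k * b ^ k * b ^ d := by gcongr
    _ = a ^ k * b ^ (k + d) := by ring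

theorem mul_binomial_term_le_mul_binomial_term_reflect (ha : 0 ≤ a) (hab : a ≤ b) {N j : ℕ}
    (hjN : j ≤ N) (hj : N < 2 * j) :
    b * (N.choose j * a ^ j * b ^ (N - j)) ≤
      a * (N.choose (N - j) * a ^ (N - j) * b ^ (N - (N - j))) := by
  have hswap : a ^ j * b ^ (N - j + 1) ≤ a ^ (N - j + 1) * b ^ j :=
    pow_mul_pow_le_pow_mul_pow_swap ha hab (by omega)
  rw [Nat.choose_symm hjN, Nat.sub_sub_self hjN]
  calc b * (N.choose j * a ^ j * b ^ (N - j))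
      = N.choose j * (a ^ j * b ^ (N - j + 1)) := by ring
    _ ≤ N.choose j * (a ^ (N - j + 1) * b ^ j) := by gcongr
    _ = a * (N.choose j * a ^ (N - j) * b ^ j) := by ring

theorem add_mul_sum_Ioc_half_binomial_le (ha : 0 ≤ a) (hab : a ≤ b) (N : ℕ) :
    (a + b) * ∑ j ∈ Finset.Ioc (N / 2) N, N.choose j * a ^ j * b ^ (N - j) ≤
      a * (a + b) ^ N := by
  have hb : 0 ≤ b := ha.trans hab
  let f : ℕ → R := fun j => N.choose j * a ^ j * b ^ (N - j)
  have hf : ∀ j, 0 ≤ f j := fun j => by positivity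
  calc (a + b) * ∑ j ∈ Finset.Ioc (N / 2) N, f j
      = ∑ j ∈ Finset.Ioc (N / 2) N, (a * f j + b * f j) := by
        simp only [Finset.mul_sum, add_mul]
    _ ≤ ∑ j ∈ Finset.Ioc (N / 2) N, (a * f j + a * f (N - j)) := by
        refine Finset.sum_le_sum fun j hj => add_le_add_right ?_ (a * f j)
        obtain ⟨hj, hjN⟩ := Finset.mem_Ioc.1 hj
        exact mul_binomial_term_le_mul_binomial_term_reflect ha hab hjN (by omega)
    _ = a * ∑ j ∈ Finset.Ioc (N / 2) N, (f j + f (N - j)) := by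
        simp only [Finset.mul_sum, mul_add]
    _ ≤ a * ∑ j ∈ Finset.range (N + 1), f j := by
        gcongr
        exact sum_Ioc_half_add_reflect_le_sum_range hf N
    _ = a * (a + b) ^ N := by
        rw [add_pow]
        congr! 2 with j
        ring

-- For even `N` the tie `j = N / 2` has to stay out of the sum: counting it breaks the bound at
-- `N = 2`, where the error would be `a * (2 - a)`.
theorem majority_error_le_crossover_general (ha : 0 ≤ a) (hab : a ≤ b) (hadd : a + b = 1)
    (N : ℕ) :
    ∑ j ∈ Finset.Ioc (N / 2) N, N.choose j * a ^ j * b ^ (N - j) ≤ a := by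
  simpa only [hadd, one_pow, one_mul, mul_one] using add_mul_sum_Ioc_half_binomial_le ha hab N

end OrderedSemiring

/-- For `0 ≤ ε ≤ 1/2` and odd `N`, majority voting over `N` independent binary symmetric
sub-channels with crossover probability `ε` never has larger error probability than a
single sub-channel: `∑_{j=(N+1)/2}^{N} C(N,j) ε^j (1−ε)^{N−j} ≤ ε`. -/
theorem majority_error_le_crossover (ε : ℝ) (h0 : 0 ≤ ε) (h1 : ε ≤ 1 / 2)
    (N : ℕ) (hodd : Odd N) (hpos : 0 < N) :
    ∑ j ∈ Finset.Icc ((N + 1) / 2) N, (N.choose j : ℝ) * ε ^ j * (1 - ε) ^ (N - j) ≤ ε := by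
  rw [show (N + 1) / 2 = N / 2 + 1 by grind, Finset.Icc_add_one_left_eq_Ioc]
  exact majority_error_le_crossover_general h0 (by linarith) (add_sub_cancel ε 1) N
end

section
/- (Channel linearization) Let p be a prime and κ > 0 a real number. Define the coarse-lattice quantizer Q_c(t) = κ·round(t/κ) for t ∈ ℝ (round denoting nearest-integer rounding), the modulo-Λ_s reduction [t] = t − κp·round(t/(κp)), the lattice modulation φ : Z_p → ℝ by φ(u) = [κ·g(u)] where g(u) ∈ {0,…,p−1} is the canonical integer representative of u, and the demodulation ψ : ℝ → Z_p by ψ(v) = (round(v/κ) mod p). Then for any L ≥ 1, any integers A_1,…,A_L ∈ ℤ, any symbols c_1,…,c_L ∈ Z_p, and any real number w, the quantize–demodulate chain is linear over Z_p: ψ( [ Q_c( ∑_{ℓ=1}^{L} A_ℓ·φ(c_ℓ) + w ) ] ) = ∑_{ℓ=1}^{L} (A_ℓ mod p)·c_ℓ + ψ( [ Q_c(w) ] ), where the right-hand sum and products are taken in Z_p. -/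
/-- Coarse-lattice quantizer `Q_c(t) = κ·round(t/κ)` onto `Λ_c = κℤ`. -/
noncomputable def coarseQuant (κ t : ℝ) : ℝ := κ * round (t / κ)

/-- Modulo-`Λ_s` reduction `[t] = t − κp·round(t/(κp))`, where `Λ_s = κpℤ`. -/
noncomputable def modShape (p : ℕ) (κ t : ℝ) : ℝ := t - κ * p * round (t / (κ * p))

/-- Lattice modulation `φ(u) = [κ·g(u)] mod Λ_s`, where `g(u) ∈ {0,…,p−1}` is the
canonical integer representative of `u ∈ Z_p`. -/
noncomputable def latticeMod (p : ℕ) (κ : ℝ) (u : ZMod p) : ℝ :=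
  modShape p κ (κ * (ZMod.val u : ℝ))

/-- Lattice demodulation `ψ(v) = round(v/κ) mod p ∈ Z_p`. -/
noncomputable def latticeDemod (p : ℕ) (κ : ℝ) (v : ℝ) : ZMod p :=
  ((round (v / κ) : ℤ) : ZMod p)

/-!
Since `ψ` rounds to `Λ_c` and then discards multiples of `p`, it sees neither `Q_c`, which performs
the same rounding, nor the reduction `[·]`, which shifts by a point of `Λ_s`. Integer multiples of
such a shift stay in `Λ_s`, so each `A_ℓ·φ(c_ℓ)` can be replaced by the point `κ·A_ℓ·g(c_ℓ)` of
`Λ_c`, and `ψ(κ·n + t) = n + ψ(t)` for every integer `n`.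
-/

section

variable (p : ℕ) {κ : ℝ}

theorem latticeDemod_mul_intCast_add (hκ : κ ≠ 0) (n : ℤ) (t : ℝ) :
    latticeDemod p κ (κ * n + t) = n + latticeDemod p κ t := by
  have hdiv : (κ * n + t) / κ = n + t / κ := by field_simp
  rw [latticeDemod, hdiv, round_intCast_add, Int.cast_add, latticeDemod]

theorem latticeDemod_intCast_mul_modShape_add (hκ : κ ≠ 0) (a : ℤ) (t v : ℝ) :
    latticeDemod p κ (a * modShape p κ t + v) = latticeDemod p κ (a * t + v) := by
  have hshift : a * modShape p κ t + v
      = κ * ((p * (-a * round (t / (κ * p))) : ℤ) : ℝ) + (a * t + v) := by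
    rw [modShape]
    push_cast
    ring
  rw [hshift, latticeDemod_mul_intCast_add p hκ]
  simp

theorem latticeDemod_modShape (hκ : κ ≠ 0) (t : ℝ) :
    latticeDemod p κ (modShape p κ t) = latticeDemod p κ t := by
  simpa using latticeDemod_intCast_mul_modShape_add p hκ 1 t 0

theorem latticeDemod_coarseQuant (hκ : κ ≠ 0) (t : ℝ) :
    latticeDemod p κ (coarseQuant κ t) = latticeDemod p κ t := by
  rw [latticeDemod, coarseQuant, mul_div_cancel_left₀ _ hκ, round_intCast, latticeDemod]

variable [NeZero p]

theorem latticeDemod_intCast_mul_latticeMod_add (hκ : κ ≠ 0) (a : ℤ) (u : ZMod p) (v : ℝ) :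
    latticeDemod p κ (a * latticeMod p κ u + v) = a * u + latticeDemod p κ v := by
  calc latticeDemod p κ (a * latticeMod p κ u + v)
      = latticeDemod p κ (a * (κ * (u.val : ℝ)) + v) :=
        latticeDemod_intCast_mul_modShape_add p hκ a _ v
    _ = latticeDemod p κ (κ * ((a * u.val : ℤ) : ℝ) + v) := by
        push_cast
        rw [mul_left_comm]
    _ = ((a * u.val : ℤ) : ZMod p) + latticeDemod p κ v :=
        latticeDemod_mul_intCast_add p hκ _ v
    _ = a * u + latticeDemod p κ v := by simp

theorem latticeDemod_sum_intCast_mul_latticeMod_add (hκ : κ ≠ 0) {ι : Type*} (s : Finset ι)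
    (A : ι → ℤ) (c : ι → ZMod p) (v : ℝ) :
    latticeDemod p κ (∑ i ∈ s, (A i : ℝ) * latticeMod p κ (c i) + v)
      = ∑ i ∈ s, (A i : ZMod p) * c i + latticeDemod p κ v := by
  induction s using Finset.cons_induction with
  | empty => simp
  | cons i s hi ih =>
    rw [Finset.sum_cons, Finset.sum_cons, add_assoc, latticeDemod_intCast_mul_latticeMod_add p hκ,
      ih, add_assoc]

theorem sawtooth_ADC_linearization_general (hκ : κ ≠ 0) {ι : Type*} (s : Finset ι)
    (A : ι → ℤ) (c : ι → ZMod p) (w : ℝ) :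
    latticeDemod p κ
        (modShape p κ (coarseQuant κ (∑ i ∈ s, (A i : ℝ) * latticeMod p κ (c i) + w)))
      = ∑ i ∈ s, (A i : ZMod p) * c i
          + latticeDemod p κ (modShape p κ (coarseQuant κ w)) := by
  simp only [latticeDemod_modShape p hκ, latticeDemod_coarseQuant p hκ]
  exact latticeDemod_sum_intCast_mul_latticeMod_add p hκ s A c w

end

/-- Channel linearization: the quantize–demodulate chain of the sawtooth ADC is linear
over `Z_p`: `ψ([Q_c(∑ ℓ, A_ℓ·φ(c_ℓ) + w)]) = ∑ ℓ, (A_ℓ mod p)·c_ℓ + ψ([Q_c(w)])`. -/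
theorem sawtooth_ADC_linearization
    (p : ℕ) [Fact p.Prime] (κ : ℝ) (hκ : 0 < κ) (L : ℕ)
    (A : Fin L → ℤ) (c : Fin L → ZMod p) (w : ℝ) :
    latticeDemod p κ
        (modShape p κ (coarseQuant κ (∑ ℓ, (A ℓ : ℝ) * latticeMod p κ (c ℓ) + w)))
      = ∑ ℓ, (A ℓ : ZMod p) * c ℓ
          + latticeDemod p κ (modShape p κ (coarseQuant κ w)) :=
  sawtooth_ADC_linearization_general p hκ.ne' Finset.univ A c w
end
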